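/- For the Robin heat kernel with parameter c > 0, p_R(τ; z, z') = p_B(τ; z, z') + p_B(τ; z, -z') - 2c ∫_0^∞ e^{-cv} p_B(τ; z, -v - z') dv, and for all τ₁, τ₂ > 0 and z₁, z₂ ≥ 0: ∫_0^∞ p_R(τ₁; z₁, u) p_R(τ₂; u, z₂) du = p_R(τ₁+τ₂; z₁, z₂). -/

import Mathlib

open MeasureTheory Real

noncomputable def pB (τ z z' : ℝ) : ℝ :=
  (Real.sqrt (2 * Real.pi * τ))⁻¹ * Real.exp (-(z - z') ^ 2 / (2 * τ))

/-- The Robin heat kernel with Robin parameter `c > 0`. -/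
noncomputable def pR (c τ z z' : ℝ) : ℝ :=
  pB τ z z' + pB τ z (-z')
    - 2 * c * ∫ v in Set.Ioi (0 : ℝ), Real.exp (-(c * v)) * pB τ z (-v - z')

/-!
Call `f : ℝ → ℝ` Robin-even if `f' - c f` is odd, as for the reflection of a function on the
half-line across a Robin boundary. On Robin-even functions the Robin semigroup is whole-line
convolution with the Gaussian: the difference of the two integrals has the antiderivative
`-J(z + u) (f(u) - f(-u))`, where `J` is the boundary term of the kernel and solves
`J' = c J - g` for the Gaussian `g`; this antiderivative vanishes at `0` and at infinity.
Since `u ↦ pR c τ₂ u z₂` is Robin-even, the semigroup law reduces to the convolution of Gaussians.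
-/

section Integral

variable {E : Type*} [NormedAddCommGroup E] [NormedSpace ℝ E]

theorem integral_eq_integral_Ioi_add_comp_neg {f : ℝ → E} (hf : Integrable f) :
    ∫ u, f u = ∫ u in Set.Ioi 0, (f u + f (-u)) := by
  rw [integral_add hf.integrableOn hf.comp_neg.integrableOn, integral_comp_neg_Ioi, neg_zero,
    add_comm, intervalIntegral.integral_Iic_add_Ioi hf.integrableOn hf.integrableOn]

theorem integral_Ioi_comp_add_left (f : ℝ → E) (s : ℝ) :
    ∫ v in Set.Ioi 0, f (s + v) = ∫ w in Set.Ioi s, f w := by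
  have h := (measurePreserving_add_left volume s).setIntegral_preimage_emb
    (measurableEmbedding_addLeft s) f (Set.Ioi s)
  rwa [Set.preimage_const_add_Ioi, sub_self] at h

theorem hasDerivAt_integral_Ioi [CompleteSpace E] {f : ℝ → E} (hf : Integrable f)
    (hcont : Continuous f) (s : ℝ) : HasDerivAt (fun s => ∫ w in Set.Ioi s, f w) (-f s) s := by
  have hsplit (s : ℝ) : ∫ w in Set.Ioi s, f w =
      (∫ w in Set.Ioi 0, f w) - ∫ w in (0 : ℝ)..s, f w := by
    rw [← intervalIntegral.integral_Ioi_sub_Ioi' hf.integrableOn hf.integrableOn, sub_sub_cancel]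
  rw [funext hsplit]
  exact (hcont.integral_hasStrictDerivAt 0 s).hasDerivAt.const_sub _

end Integral

/-- The bulk heat kernel as a function of the displacement `x = z - z'`. -/
noncomputable def heatKernel (τ x : ℝ) : ℝ := pB τ x 0

/-- The integral in the boundary term of the Robin heat kernel, as a function of `s = z + z'`. -/
noncomputable def robinTail (c τ s : ℝ) : ℝ :=
  ∫ v in Set.Ioi (0 : ℝ), exp (-(c * v)) * heatKernel τ (s + v)

theorem heatKernel_eq (τ x : ℝ) :
    heatKernel τ x = (√(2 * π * τ))⁻¹ * exp (-x ^ 2 / (2 * τ)) := by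
  rw [heatKernel, pB, sub_zero]

theorem pB_eq_heatKernel_sub (τ z z' : ℝ) : pB τ z z' = heatKernel τ (z - z') := by
  rw [heatKernel_eq, pB]

theorem pR_eq_heatKernel_sub_robinTail (c τ z z' : ℝ) :
    pR c τ z z' = heatKernel τ (z - z') + heatKernel τ (z + z')
      - 2 * c * robinTail c τ (z + z') := by
  have hreflect (v : ℝ) : z - (-v - z') = z + z' + v := by ring
  simp only [pR, pB_eq_heatKernel_sub, robinTail, sub_neg_eq_add, hreflect]

theorem heatKernel_neg (τ x : ℝ) : heatKernel τ (-x) = heatKernel τ x := by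
  simp [heatKernel_eq]

@[fun_prop]
theorem continuous_heatKernel (τ : ℝ) : Continuous (heatKernel τ) := by
  simp only [funext (heatKernel_eq τ)]
  fun_prop

section HeatKernel

variable {τ τ₁ τ₂ : ℝ}

theorem heatKernel_eq_gaussianPDFReal (hτ : 0 ≤ τ) :
    heatKernel τ = ProbabilityTheory.gaussianPDFReal 0 τ.toNNReal := by
  ext x
  simp only [heatKernel_eq, ProbabilityTheory.gaussianPDFReal, sub_zero, coe_toNNReal τ hτ]

theorem heatKernel_nonneg (τ x : ℝ) : 0 ≤ heatKernel τ x := by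
  rw [heatKernel_eq]
  positivity

theorem heatKernel_pos (hτ : 0 < τ) (x : ℝ) : 0 < heatKernel τ x := by
  rw [heatKernel_eq]
  positivity

theorem integrable_heatKernel (hτ : 0 ≤ τ) : Integrable (heatKernel τ) := by
  rw [heatKernel_eq_gaussianPDFReal hτ]
  exact ProbabilityTheory.integrable_gaussianPDFReal _ _

theorem integral_heatKernel (hτ : 0 < τ) : ∫ x, heatKernel τ x = 1 := by
  rw [heatKernel_eq_gaussianPDFReal hτ.le]
  exact ProbabilityTheory.integral_gaussianPDFReal_eq_one _ (toNNReal_pos.mpr hτ).ne'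

theorem heatKernel_mul_heatKernel (hτ₁ : 0 < τ₁) (hτ₂ : 0 < τ₂) (a b u : ℝ) :
    heatKernel τ₁ (a - u) * heatKernel τ₂ (u + b) =
      heatKernel (τ₁ + τ₂) (a + b) *
        heatKernel (τ₁ * τ₂ / (τ₁ + τ₂)) (u - (a * τ₂ - b * τ₁) / (τ₁ + τ₂)) := by
  have hsqrt : √(2 * π * τ₁) * √(2 * π * τ₂) =
      √(2 * π * (τ₁ + τ₂)) * √(2 * π * (τ₁ * τ₂ / (τ₁ + τ₂))) := by
    rw [← sqrt_mul (by positivity), ← sqrt_mul (by positivity)]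
    congr 1
    field_simp
  simp only [heatKernel_eq]
  rw [mul_mul_mul_comm, ← mul_inv, hsqrt, mul_inv, ← exp_add, mul_mul_mul_comm, ← exp_add]
  congr 2
  field_simp
  ring

theorem integrable_heatKernel_mul_heatKernel (hτ₁ : 0 < τ₁) (hτ₂ : 0 < τ₂) (a b : ℝ) :
    Integrable fun u => heatKernel τ₁ (a - u) * heatKernel τ₂ (u + b) := by
  simp_rw [heatKernel_mul_heatKernel hτ₁ hτ₂]
  exact ((integrable_heatKernel (by positivity)).comp_sub_right _).const_mul _

theorem integral_heatKernel_mul_heatKernel (hτ₁ : 0 < τ₁) (hτ₂ : 0 < τ₂) (a b : ℝ) :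
    ∫ u, heatKernel τ₁ (a - u) * heatKernel τ₂ (u + b) = heatKernel (τ₁ + τ₂) (a + b) := by
  simp_rw [heatKernel_mul_heatKernel hτ₁ hτ₂]
  rw [integral_const_mul, integral_sub_right_eq_self (heatKernel _),
    integral_heatKernel (by positivity), mul_one]

theorem exp_neg_mul_mul_heatKernel (hτ : τ ≠ 0) (c x : ℝ) :
    exp (-(c * x)) * heatKernel τ x = exp (c ^ 2 * τ / 2) * heatKernel τ (x + c * τ) := by
  simp only [heatKernel_eq]
  rw [mul_left_comm, ← exp_add, mul_left_comm, ← exp_add]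
  congr 2
  field_simp
  ring

theorem integrable_exp_neg_mul_mul_heatKernel (hτ : 0 < τ) (c : ℝ) :
    Integrable fun x => exp (-(c * x)) * heatKernel τ x := by
  simp_rw [exp_neg_mul_mul_heatKernel hτ.ne']
  exact ((integrable_heatKernel hτ.le).comp_add_right _).const_mul _

theorem exp_neg_mul_mul_heatKernel_add (c τ s v : ℝ) :
    exp (-(c * v)) * heatKernel τ (s + v) =
      exp (c * s) * (exp (-(c * (s + v))) * heatKernel τ (s + v)) := by
  rw [← mul_assoc, ← exp_add]
  ring_nf

theorem integrable_exp_neg_mul_mul_heatKernel_add (hτ : 0 < τ) (c s : ℝ) :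
    Integrable fun v => exp (-(c * v)) * heatKernel τ (s + v) := by
  simp_rw [exp_neg_mul_mul_heatKernel_add]
  exact ((integrable_exp_neg_mul_mul_heatKernel hτ c).comp_add_left s).const_mul _

theorem heatKernel_add_mul_heatKernel_le (hτ : 0 ≤ τ) {a s v : ℝ} (has : a ≤ s) (hv : 0 ≤ v) :
    heatKernel τ (s + v) * heatKernel τ a ≤ heatKernel τ (a + v) * heatKernel τ s := by
  simp only [heatKernel_eq]
  rw [mul_mul_mul_comm, ← exp_add, mul_mul_mul_comm, ← exp_add, ← add_div, ← add_div]
  gcongr _ * exp (?_ / _)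
  linarith [mul_le_mul_of_nonneg_right has hv]

end HeatKernel

section RobinTail

variable {τ τ₁ τ₂ : ℝ}

theorem robinTail_nonneg (c τ s : ℝ) : 0 ≤ robinTail c τ s :=
  integral_nonneg fun _ => mul_nonneg (exp_nonneg _) (heatKernel_nonneg _ _)

theorem robinTail_eq_exp_mul_integral_Ioi (c τ s : ℝ) :
    robinTail c τ s = exp (c * s) * ∫ w in Set.Ioi s, exp (-(c * w)) * heatKernel τ w := by
  simp_rw [robinTail, exp_neg_mul_mul_heatKernel_add, integral_const_mul]
  rw [integral_Ioi_comp_add_left fun w => exp (-(c * w)) * heatKernel τ w]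

theorem hasDerivAt_robinTail (hτ : 0 < τ) (c s : ℝ) :
    HasDerivAt (robinTail c τ) (c * robinTail c τ s - heatKernel τ s) s := by
  have htail := hasDerivAt_integral_Ioi (integrable_exp_neg_mul_mul_heatKernel hτ c)
    (by fun_prop) s
  rw [funext (robinTail_eq_exp_mul_integral_Ioi c τ)]
  refine (((hasDerivAt_id s).const_mul c).exp.mul htail).congr_deriv ?_
  have hexp : exp (c * s) * exp (-(c * s)) = 1 := by rw [← exp_add, add_neg_cancel, exp_zero]
  simp only [id]
  linear_combination -heatKernel τ s * hexp

theorem continuous_robinTail (hτ : 0 < τ) (c : ℝ) : Continuous (robinTail c τ) :=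
  continuous_iff_continuousAt.mpr fun s => (hasDerivAt_robinTail hτ c s).continuousAt

/-- For `c = 0` the quotient is the Mills ratio of the Gaussian. -/
theorem antitone_robinTail_div_heatKernel (hτ : 0 < τ) (c : ℝ) :
    Antitone fun s => robinTail c τ s / heatKernel τ s := by
  intro a s has
  rw [div_le_div_iff₀ (heatKernel_pos hτ s) (heatKernel_pos hτ a), robinTail, robinTail,
    ← integral_mul_const, ← integral_mul_const]
  refine setIntegral_mono_on
    ((integrable_exp_neg_mul_mul_heatKernel_add hτ c s).mul_const _).integrableOn
    ((integrable_exp_neg_mul_mul_heatKernel_add hτ c a).mul_const _).integrableOn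
    measurableSet_Ioi fun v hv => ?_
  rw [mul_assoc, mul_assoc]
  exact mul_le_mul_of_nonneg_left (heatKernel_add_mul_heatKernel_le hτ.le has (le_of_lt hv))
    (exp_nonneg _)

theorem integrableOn_Ioi_robinTail_mul (hτ : 0 < τ) (c : ℝ) {z : ℝ} {f : ℝ → ℝ}
    (hf : IntegrableOn (fun u => heatKernel τ (z + u) * f u) (Set.Ioi 0)) :
    IntegrableOn (fun u => robinTail c τ (z + u) * f u) (Set.Ioi 0) := by
  have hratio : Continuous fun u => robinTail c τ (z + u) / heatKernel τ (z + u) := by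
    have := continuous_robinTail hτ c
    fun_prop (disch := exact fun u => (heatKernel_pos hτ _).ne')
  refine (hf.bdd_mul (c := robinTail c τ z / heatKernel τ z) hratio.aestronglyMeasurable
    ?_).congr (.of_forall fun u => ?_)
  · filter_upwards [ae_restrict_mem measurableSet_Ioi] with u hu
    rw [norm_of_nonneg (div_nonneg (robinTail_nonneg _ _ _) (heatKernel_nonneg _ _))]
    exact antitone_robinTail_div_heatKernel hτ c (le_add_of_nonneg_right (le_of_lt hu))
  · have := (heatKernel_pos hτ (z + u)).ne'
    field_simp

theorem integrable_heatKernel_mul_exp_mul_heatKernel (hτ₁ : 0 < τ₁) (hτ₂ : 0 < τ₂)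
    (c a b : ℝ) :
    Integrable (Function.uncurry fun u v : ℝ =>
      heatKernel τ₁ (a - u) * (exp (-(c * v)) * heatKernel τ₂ (u + b + v)))
      (volume.prod (volume.restrict (Set.Ioi 0))) := by
  have hcomm (u v : ℝ) : heatKernel τ₁ (a - u) * (exp (-(c * v)) * heatKernel τ₂ (u + b + v)) =
      exp (-(c * v)) * (heatKernel τ₁ (a - u) * heatKernel τ₂ (u + (b + v))) := by
    rw [add_assoc, mul_left_comm]
  have hnonneg (u v : ℝ) :
      0 ≤ exp (-(c * v)) * (heatKernel τ₁ (a - u) * heatKernel τ₂ (u + (b + v))) :=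
    mul_nonneg (exp_nonneg _) (mul_nonneg (heatKernel_nonneg _ _) (heatKernel_nonneg _ _))
  refine (integrable_prod_iff' (Continuous.aestronglyMeasurable (by fun_prop))).mpr ⟨?_, ?_⟩
  · refine .of_forall fun v => ?_
    simp only [Function.uncurry_apply_pair, hcomm]
    exact (integrable_heatKernel_mul_heatKernel hτ₁ hτ₂ a (b + v)).const_mul _
  · simp only [Function.uncurry_apply_pair, hcomm, norm_of_nonneg (hnonneg _ _),
      integral_const_mul, integral_heatKernel_mul_heatKernel hτ₁ hτ₂]
    simpa only [add_assoc] using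
      (integrable_exp_neg_mul_mul_heatKernel_add (add_pos hτ₁ hτ₂) c (a + b)).restrict

theorem integrable_heatKernel_mul_robinTail (hτ₁ : 0 < τ₁) (hτ₂ : 0 < τ₂) (c a b : ℝ) :
    Integrable fun u => heatKernel τ₁ (a - u) * robinTail c τ₂ (u + b) := by
  simp_rw [robinTail, ← integral_const_mul]
  exact (integrable_heatKernel_mul_exp_mul_heatKernel hτ₁ hτ₂ c a b).integral_prod_left

theorem integral_heatKernel_mul_robinTail (hτ₁ : 0 < τ₁) (hτ₂ : 0 < τ₂) (c a b : ℝ) :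
    ∫ u, heatKernel τ₁ (a - u) * robinTail c τ₂ (u + b) = robinTail c (τ₁ + τ₂) (a + b) := by
  simp_rw [robinTail, ← integral_const_mul]
  rw [integral_integral_swap (integrable_heatKernel_mul_exp_mul_heatKernel hτ₁ hτ₂ c a b)]
  simp_rw [mul_left_comm (heatKernel τ₁ _), integral_const_mul, add_assoc,
    integral_heatKernel_mul_heatKernel hτ₁ hτ₂]

end RobinTail

section RobinKernel

variable {τ₁ τ₂ : ℝ}

theorem heatKernel_mul_pR (c τ₁ τ₂ a u z : ℝ) :
    heatKernel τ₁ (a - u) * pR c τ₂ u z =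
      heatKernel τ₁ (a - u) * heatKernel τ₂ (u + -z) + heatKernel τ₁ (a - u) * heatKernel τ₂ (u + z)
        - 2 * c * (heatKernel τ₁ (a - u) * robinTail c τ₂ (u + z)) := by
  rw [pR_eq_heatKernel_sub_robinTail, sub_eq_add_neg u]
  ring

theorem integrable_heatKernel_mul_pR (hτ₁ : 0 < τ₁) (hτ₂ : 0 < τ₂) (c a z : ℝ) :
    Integrable fun u => heatKernel τ₁ (a - u) * pR c τ₂ u z := by
  simp_rw [heatKernel_mul_pR]
  exact ((integrable_heatKernel_mul_heatKernel hτ₁ hτ₂ a (-z)).add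
    (integrable_heatKernel_mul_heatKernel hτ₁ hτ₂ a z)).sub
      ((integrable_heatKernel_mul_robinTail hτ₁ hτ₂ c a z).const_mul _)

theorem integral_heatKernel_mul_pR (hτ₁ : 0 < τ₁) (hτ₂ : 0 < τ₂) (c a z : ℝ) :
    ∫ u, heatKernel τ₁ (a - u) * pR c τ₂ u z = pR c (τ₁ + τ₂) a z := by
  have hdirect := integrable_heatKernel_mul_heatKernel hτ₁ hτ₂ a (-z)
  have himage := integrable_heatKernel_mul_heatKernel hτ₁ hτ₂ a z
  have htail := integrable_heatKernel_mul_robinTail hτ₁ hτ₂ c a z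
  simp_rw [heatKernel_mul_pR]
  rw [integral_sub (by exact hdirect.add himage) (htail.const_mul _), integral_add hdirect himage,
    integral_const_mul, integral_heatKernel_mul_heatKernel hτ₁ hτ₂,
    integral_heatKernel_mul_heatKernel hτ₁ hτ₂, integral_heatKernel_mul_robinTail hτ₁ hτ₂,
    pR_eq_heatKernel_sub_robinTail, sub_eq_add_neg a]

end RobinKernel

/-- `f` extends its restriction to the half-line by reflection across a Robin boundary at `0`:
`f' - c f` is odd. The condition is put on the odd part of `f`, so `f` itself need not be
differentiable; for `c = 0` it says that `f` is even. -/
def IsRobinEven (c : ℝ) (f : ℝ → ℝ) : Prop :=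
  ∀ u, HasDerivAt (fun u => f u - f (-u)) (c * (f u + f (-u))) u

theorem isRobinEven_pR {τ : ℝ} (hτ : 0 < τ) (c z : ℝ) : IsRobinEven c fun u => pR c τ u z := by
  intro u
  have hodd (u : ℝ) : pR c τ u z - pR c τ (-u) z =
      2 * c * (robinTail c τ (-u + z) - robinTail c τ (u + z)) := by
    rw [pR_eq_heatKernel_sub_robinTail, pR_eq_heatKernel_sub_robinTail, ← neg_add', heatKernel_neg,
      neg_add_eq_sub, ← neg_sub u z, heatKernel_neg]
    ring
  have hright := (hasDerivAt_robinTail hτ c (u + z)).comp_add_const u z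
  have hleft := (hasDerivAt_robinTail hτ c (-u + z)).comp u ((hasDerivAt_neg u).add_const z)
  simp_rw [hodd]
  refine ((hleft.sub hright).const_mul (2 * c)).congr_deriv ?_
  rw [pR_eq_heatKernel_sub_robinTail, pR_eq_heatKernel_sub_robinTail, ← neg_add', heatKernel_neg,
    neg_add_eq_sub, ← neg_sub u z, heatKernel_neg]
  ring

namespace IsRobinEven

variable {c τ : ℝ} {f : ℝ → ℝ}

theorem hasDerivAt_neg_robinTail_mul (hf : IsRobinEven c f) (hτ : 0 < τ) (z u : ℝ) :
    HasDerivAt (fun u => -(robinTail c τ (z + u) * (f u - f (-u))))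
      (heatKernel τ (z + u) * (f u - f (-u)) - 2 * c * (robinTail c τ (z + u) * f u)) u := by
  have htail := (hasDerivAt_robinTail hτ c (z + u)).comp_const_add z u
  refine (htail.mul (hf u)).neg.congr_deriv ?_
  ring

theorem integral_Ioi_heatKernel_mul_sub_robinTail_mul (hf : IsRobinEven c f) (hτ : 0 < τ) (z : ℝ)
    (hpos : IntegrableOn (fun u => heatKernel τ (z + u) * f u) (Set.Ioi 0))
    (hneg : IntegrableOn (fun u => heatKernel τ (z + u) * f (-u)) (Set.Ioi 0)) :
    ∫ u in Set.Ioi 0,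
      (heatKernel τ (z + u) * (f u - f (-u)) - 2 * c * (robinTail c τ (z + u) * f u)) = 0 := by
  have hodd : IntegrableOn (fun u => heatKernel τ (z + u) * (f u - f (-u))) (Set.Ioi 0) := by
    simp_rw [mul_sub]
    exact hpos.sub hneg
  have hderiv_int := hodd.sub ((integrableOn_Ioi_robinTail_mul hτ c hpos).const_mul (2 * c))
  have hlim := tendsto_zero_of_hasDerivAt_of_integrableOn_Ioi
    (fun u _ => hf.hasDerivAt_neg_robinTail_mul hτ z u) hderiv_int
    (integrableOn_Ioi_robinTail_mul hτ c hodd).neg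
  rw [integral_Ioi_of_hasDerivAt_of_tendsto'
    (fun u _ => hf.hasDerivAt_neg_robinTail_mul hτ z u) hderiv_int hlim]
  simp

theorem integral_Ioi_pR_mul (hf : IsRobinEven c f) (hτ : 0 < τ) (z : ℝ)
    (hconv : ∀ a, Integrable fun u => heatKernel τ (a - u) * f u) :
    ∫ u in Set.Ioi 0, pR c τ z u * f u = ∫ u, heatKernel τ (z - u) * f u := by
  have hpos : IntegrableOn (fun u => heatKernel τ (z + u) * f u) (Set.Ioi 0) := by
    refine (hconv (-z)).integrableOn.congr_fun (fun u _ => ?_) measurableSet_Ioi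
    simp only [← neg_add', heatKernel_neg]
  have hneg : IntegrableOn (fun u => heatKernel τ (z + u) * f (-u)) (Set.Ioi 0) := by
    simpa only [sub_neg_eq_add] using (hconv z).comp_neg.integrableOn
  have hsplit (u : ℝ) : pR c τ z u * f u =
      (heatKernel τ (z - u) * f u + heatKernel τ (z - -u) * f (-u)) +
        (heatKernel τ (z + u) * (f u - f (-u)) - 2 * c * (robinTail c τ (z + u) * f u)) := by
    rw [pR_eq_heatKernel_sub_robinTail, sub_neg_eq_add]
    ring
  simp_rw [hsplit]
  rw [integral_add, hf.integral_Ioi_heatKernel_mul_sub_robinTail_mul hτ z hpos hneg, add_zero,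
    integral_eq_integral_Ioi_add_comp_neg (hconv z)]
  · exact ((hconv z).add (hconv z).comp_neg).integrableOn
  · simp_rw [mul_sub]
    exact (hpos.sub hneg).sub ((integrableOn_Ioi_robinTail_mul hτ c hpos).const_mul (2 * c))

end IsRobinEven

theorem robin_halfline_semigroup_general {τ₁ τ₂ : ℝ} (hτ₁ : 0 < τ₁) (hτ₂ : 0 < τ₂)
    (c z₁ z₂ : ℝ) :
    ∫ u in Set.Ioi (0 : ℝ), pR c τ₁ z₁ u * pR c τ₂ u z₂ = pR c (τ₁ + τ₂) z₁ z₂ := by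
  rw [(isRobinEven_pR hτ₂ c z₂).integral_Ioi_pR_mul hτ₁ z₁
      (integrable_heatKernel_mul_pR hτ₁ hτ₂ c · z₂),
    integral_heatKernel_mul_pR hτ₁ hτ₂]

theorem robin_halfline_semigroup (c : ℝ) (hc : 0 < c) (τ₁ τ₂ : ℝ)
    (hτ₁ : 0 < τ₁) (hτ₂ : 0 < τ₂) (z₁ z₂ : ℝ) (hz₁ : 0 ≤ z₁) (hz₂ : 0 ≤ z₂) :
    ∫ u in Set.Ioi (0 : ℝ), pR c τ₁ z₁ u * pR c τ₂ u z₂ = pR c (τ₁ + τ₂) z₁ z₂ :=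
  robin_halfline_semigroup_general hτ₁ hτ₂ c z₁ z₂
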